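/- arXiv:2211.03365 — 8 statements merged into one kernel-verified Lean document; each statement's English description precedes it below -/
import Mathlib

section
/- Let G be a finite simple graph, let σ, ρ ⊆ ℕ be finite sets, and let s : V(G) → ℚ be a function with s(v) ∈ {0,1} for every vertex v. Then the following are equivalent: (1) for every vertex v, (∏_{i ∈ ρ} ((i − Σ_{u ∈ N(v)} s(u))² + s(v))) · (1 − s(v)) + (∏_{j ∈ σ} ((j − Σ_{u ∈ N(v)} s(u))² + (s(v) − 1))) · s(v) = 0; (2) the set D = {v : s(v) = 1} is a [σ,ρ]-dominating set of G. -/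
/-- A set `D` is a `[σ,ρ]`-dominating set of `G` if every vertex in `D` has a number of
neighbors in `D` lying in `σ`, and every vertex outside `D` has a number of neighbors
in `D` lying in `ρ`. -/
def SigmaRhoDominating {V : Type*} [Fintype V] [DecidableEq V] (G : SimpleGraph V)
    [DecidableRel G.Adj] (σ ρ : Set ℕ) (D : Finset V) : Prop :=
  ∀ v : V, (v ∈ D → (G.neighborFinset v ∩ D).card ∈ σ) ∧
    (v ∉ D → (G.neighborFinset v ∩ D).card ∈ ρ)

/-!
At a vertex where `s` vanishes only the product over `ρ` survives, and where `s` equals `1` only the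
product over `σ`; in both cases the term added to each squared factor vanishes as well. What is left
is `∏ (i - n) ^ 2`, where `n`, the sum of `s` over the neighbors, counts the neighbors in `D`.
-/

theorem sum_eq_card_filter_eq_one {ι R : Type*} [AddCommMonoidWithOne R] [DecidableEq R]
    {t : Finset ι} {f : ι → R} (hf : ∀ i ∈ t, f i = 0 ∨ f i = 1) :
    ∑ i ∈ t, f i = ((t.filter (f · = 1)).card : R) := by
  rw [← Finset.sum_boole]
  refine Finset.sum_congr rfl fun i hi => ?_
  split_ifs with h
  · exact h
  · exact (hf i hi).resolve_right h

section Domain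

variable {R : Type*} [CommRing R] [NoZeroDivisors R] [CharZero R]

theorem prod_natCast_sub_pow_eq_zero_iff {τ : Finset ℕ} {n k : ℕ} (hk : k ≠ 0) :
    ∏ i ∈ τ, ((i : R) - n) ^ k = 0 ↔ n ∈ τ := by
  simp only [Finset.prod_eq_zero_iff, pow_eq_zero_iff hk, sub_eq_zero, Nat.cast_inj,
    exists_eq_right]

theorem prod_mul_one_sub_add_prod_mul_eq_zero_iff {σ ρ : Finset ℕ} {n : ℕ} {x : R}
    (hx : x = 0 ∨ x = 1) :
    (∏ i ∈ ρ, (((i : R) - n) ^ 2 + x)) * (1 - x)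
        + (∏ j ∈ σ, (((j : R) - n) ^ 2 + (x - 1))) * x = 0
      ↔ (x = 1 → n ∈ σ) ∧ (x ≠ 1 → n ∈ ρ) := by
  rcases hx with rfl | rfl
  · simp [prod_natCast_sub_pow_eq_zero_iff]
  · simp [prod_natCast_sub_pow_eq_zero_iff]

theorem stmt0_general [DecidableEq R] {V : Type*} [Fintype V] [DecidableEq V] (G : SimpleGraph V)
    [DecidableRel G.Adj] (σ ρ : Finset ℕ) (s : V → R) (hs : ∀ v : V, s v = 0 ∨ s v = 1) :
    (∀ v : V,
      (∏ i ∈ ρ, (((i : R) - ∑ u ∈ G.neighborFinset v, s u) ^ 2 + s v)) * (1 - s v)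
        + (∏ j ∈ σ, (((j : R) - ∑ u ∈ G.neighborFinset v, s u) ^ 2 + (s v - 1))) * s v = 0)
    ↔ SigmaRhoDominating G (↑σ) (↑ρ) (Finset.univ.filter (fun v => s v = 1)) := by
  refine forall_congr' fun v => ?_
  have neighbors_inter : G.neighborFinset v ∩ Finset.univ.filter (fun u => s u = 1)
      = (G.neighborFinset v).filter (s · = 1) := by
    rw [Finset.inter_filter, Finset.inter_univ]
  rw [sum_eq_card_filter_eq_one fun u _ => hs u,
    prod_mul_one_sub_add_prod_mul_eq_zero_iff (hs v), neighbors_inter]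
  simp only [Finset.mem_filter_univ, Finset.mem_coe, ne_eq]

end Domain

theorem stmt0 {V : Type*} [Fintype V] [DecidableEq V] (G : SimpleGraph V) [DecidableRel G.Adj]
    (σ ρ : Finset ℕ) (s : V → ℚ) (hs : ∀ v : V, s v = 0 ∨ s v = 1) :
    (∀ v : V,
      (∏ i ∈ ρ, (((i : ℚ) - ∑ u ∈ G.neighborFinset v, s u) ^ 2 + s v)) * (1 - s v)
        + (∏ j ∈ σ, (((j : ℚ) - ∑ u ∈ G.neighborFinset v, s u) ^ 2 + (s v - 1))) * s v = 0)
    ↔ SigmaRhoDominating G (↑σ) (↑ρ) (Finset.univ.filter (fun v => s v = 1)) :=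
  stmt0_general G σ ρ s hs
end

section
/- Let G be a finite simple graph, let d ∈ ℕ, let S be a degree-d-modulator of G, and let σ, ρ ⊆ ℕ be sets satisfying the d-separation condition. Let D be a [σ,ρ]-dominating set of G and let v be a vertex with v ∉ S. If there exist i ∈ ρ and an integer j with 0 ≤ j ≤ d such that |N(v) ∩ S ∩ D| = i − j, then v ∉ D. Similarly, if there exist i ∈ σ and an integer j with 0 ≤ j ≤ d such that |N(v) ∩ S ∩ D| = i − j, then v ∈ D. -/
/-- `S` is a degree-`d`-modulator of `G` if every vertex not in `S` has at most `d`
neighbors not in `S`. -/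
def DegreeModulator {V : Type*} [Fintype V] [DecidableEq V] (G : SimpleGraph V)
    [DecidableRel G.Adj] (d : ℕ) (S : Finset V) : Prop :=
  ∀ v : V, v ∉ S → (G.neighborFinset v \ S).card ≤ d

/-- The `d`-separation condition for `σ, ρ ⊆ ℕ`. -/
def DSeparation (d : ℕ) (σ ρ : Set ℕ) : Prop :=
  (∀ i ∈ σ, ∀ j : ℕ, j ≤ d → ∀ r ∈ ρ, (i : ℤ) - (j : ℤ) ≠ (r : ℤ)) ∧
  (∀ i ∈ ρ, ∀ j : ℕ, j ≤ d → ∀ r ∈ σ, (i : ℤ) - (j : ℤ) ≠ (r : ℤ))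

/-!
Write `c = |N(v) ∩ S ∩ D|`. At most `d` neighbors of `v` lie outside `S`, so `|N(v) ∩ D|` lies in
the window `[c, c + d]`. The equation `c = i - j` with `0 ≤ j ≤ d` says that `i` lies in the same
window. Separation says exactly that no such window meets both `σ` and `ρ`, so `|N(v) ∩ D|` and `i`
cannot come from different sets.
-/

theorem exists_le_and_cast_eq_sub_iff_mem_Icc {c d i : ℕ} :
    (∃ j : ℕ, j ≤ d ∧ (c : ℤ) = (i : ℤ) - (j : ℤ)) ↔ i ∈ Set.Icc c (c + d) := by
  rw [Set.mem_Icc]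
  constructor
  · rintro ⟨j, hj, hc⟩
    omega
  · rintro ⟨hci, hid⟩
    exact ⟨i - c, by omega, by omega⟩

theorem DSeparation.notMem_Icc {d : ℕ} {σ ρ : Set ℕ} (hsep : DSeparation d σ ρ) {a b c : ℕ}
    (ha : a ∈ σ) (hb : b ∈ ρ) (hac : a ∈ Set.Icc c (c + d)) : b ∉ Set.Icc c (c + d) := by
  rintro ⟨hcb, hbd⟩
  obtain ⟨hca, had⟩ := hac
  rcases le_total a b with hab | hba
  · exact hsep.2 b hb (b - a) (by omega) a ha (by omega)
  · exact hsep.1 a ha (a - b) (by omega) b hb (by omega)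

theorem ncard_inter_mem_Icc_of_ncard_sdiff_le {α : Type*} {N S : Set α} {d : ℕ} (hN : N.Finite)
    (hS : (N \ S).ncard ≤ d) (D : Set α) :
    (N ∩ D).ncard ∈ Set.Icc (N ∩ S ∩ D).ncard ((N ∩ S ∩ D).ncard + d) := by
  constructor
  · exact Set.ncard_le_ncard (Set.inter_subset_inter_left D Set.inter_subset_left)
      (hN.inter_of_left D)
  · have hcover : N ∩ D ⊆ (N ∩ S ∩ D) ∪ (N \ S) := by
      rintro x ⟨hxN, hxD⟩
      by_cases hxS : x ∈ S
      · exact Or.inl ⟨⟨hxN, hxS⟩, hxD⟩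
      · exact Or.inr ⟨hxN, hxS⟩
    calc (N ∩ D).ncard
        ≤ ((N ∩ S ∩ D) ∪ (N \ S)).ncard :=
          Set.ncard_le_ncard hcover (((hN.inter_of_left S).inter_of_left D).union hN.sdiff)
      _ ≤ (N ∩ S ∩ D).ncard + (N \ S).ncard := Set.ncard_union_le _ _
      _ ≤ (N ∩ S ∩ D).ncard + d := by gcongr

theorem stmt2_general {V : Type*} (G : SimpleGraph V) {d : ℕ} {σ ρ : Set ℕ}
    (hsep : DSeparation d σ ρ) {v : V} (hfin : (G.neighborSet v).Finite) {S D : Set V}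
    (hS : (G.neighborSet v \ S).ncard ≤ d)
    (hσ : v ∈ D → (G.neighborSet v ∩ D).ncard ∈ σ)
    (hρ : v ∉ D → (G.neighborSet v ∩ D).ncard ∈ ρ) :
    ((∃ i ∈ ρ, ∃ j : ℕ, j ≤ d ∧
        ((G.neighborSet v ∩ S ∩ D).ncard : ℤ) = (i : ℤ) - (j : ℤ)) → v ∉ D) ∧
    ((∃ i ∈ σ, ∃ j : ℕ, j ≤ d ∧
        ((G.neighborSet v ∩ S ∩ D).ncard : ℤ) = (i : ℤ) - (j : ℤ)) → v ∈ D) := by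
  have hwindow := ncard_inter_mem_Icc_of_ncard_sdiff_le hfin hS D
  simp only [exists_le_and_cast_eq_sub_iff_mem_Icc]
  constructor
  · rintro ⟨i, hi, hiwindow⟩ hvD
    exact hsep.notMem_Icc (hσ hvD) hi hwindow hiwindow
  · rintro ⟨i, hi, hiwindow⟩
    by_contra hvD
    exact hsep.notMem_Icc hi (hρ hvD) hiwindow hwindow

theorem stmt2 {V : Type*} [Fintype V] [DecidableEq V] (G : SimpleGraph V) [DecidableRel G.Adj]
    (d : ℕ) (S : Finset V) (hS : DegreeModulator G d S)
    (σ ρ : Set ℕ) (hsep : DSeparation d σ ρ)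
    (D : Finset V) (hD : SigmaRhoDominating G σ ρ D)
    (v : V) (hv : v ∉ S) :
    ((∃ i ∈ ρ, ∃ j : ℕ, j ≤ d ∧
        ((G.neighborFinset v ∩ S ∩ D).card : ℤ) = (i : ℤ) - (j : ℤ)) → v ∉ D) ∧
    ((∃ i ∈ σ, ∃ j : ℕ, j ≤ d ∧
        ((G.neighborFinset v ∩ S ∩ D).card : ℤ) = (i : ℤ) - (j : ℤ)) → v ∈ D) := by
  simp only [DegreeModulator, SigmaRhoDominating, ← Set.ncard_coe_finset, Finset.coe_inter,
    Finset.coe_sdiff, SimpleGraph.coe_neighborFinset] at hS hD ⊢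
  exact stmt2_general G hsep (Set.toFinite _) (hS v hv) (hD v).1 (hD v).2
end

section
/- Let G be a finite simple graph, let d ∈ ℕ, let S be a degree-d-modulator of G, and let σ, ρ ⊆ ℕ be sets satisfying the d-separation condition. If D₁ and D₂ are [σ,ρ]-dominating sets of G with D₁ ∩ S = D₂ ∩ S, then D₁ = D₂. -/
/-! Two dominating sets that agree on `S` give a vertex `v ∉ S` the same number of dominating
neighbors inside `S`, so their counts at `v` differ by at most the number of neighbors of `v`
outside `S`, which is at most `d`. If `v` lay in exactly one of the two sets, one count would be in
`σ` and the other in `ρ`, and `d`-separation says that such counts differ by more than `d`. -/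

/-- The degree-`d`-modulators of a possibly infinite graph. Neighbors are counted with `Set.encard`,
so that an infinite set of neighbors outside `S` violates the bound. -/
def IsDegreeModulator {V : Type*} (G : SimpleGraph V) (d : ℕ) (S : Set V) : Prop :=
  ∀ v ∉ S, (G.neighborSet v \ S).encard ≤ d

/-- The condition of `[σ,ρ]`-domination by `D`, imposed only at the vertices in `T`, in a possibly
infinite graph. In particular each vertex in `T` has only finitely many neighbors in `D`. -/
def IsSigmaRhoDominatingOn {V : Type*} (G : SimpleGraph V) (σ ρ : Set ℕ) (T D : Set V) : Prop :=
  ∀ v ∈ T, (v ∈ D → ∃ i ∈ σ, (G.neighborSet v ∩ D).encard = i) ∧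
    (v ∉ D → ∃ r ∈ ρ, (G.neighborSet v ∩ D).encard = r)

theorem DSeparation.add_lt_or_add_lt {d : ℕ} {σ ρ : Set ℕ} (hsep : DSeparation d σ ρ) {i r : ℕ}
    (hi : i ∈ σ) (hr : r ∈ ρ) : i + d < r ∨ r + d < i := by
  by_contra! h
  rcases le_total i r with hir | hri
  · exact hsep.2 r hr (r - i) (by lia) i hi (by lia)
  · exact hsep.1 i hi (i - r) (by lia) r hr (by lia)

theorem encard_inter_le_encard_inter_add_encard_diff {α : Type*} {S A B : Set α}
    (hAB : A ∩ S = B ∩ S) (N : Set α) : (N ∩ A).encard ≤ (N ∩ B).encard + (N \ S).encard := by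
  have hcover : N ∩ A ⊆ (N ∩ B) ∪ (N \ S) := by
    rintro x ⟨hxN, hxA⟩
    by_cases hxS : x ∈ S
    · have hxB : x ∈ B ∩ S := hAB ▸ ⟨hxA, hxS⟩
      exact .inl ⟨hxN, hxB.1⟩
    · exact .inr ⟨hxN, hxS⟩
  exact (Set.encard_le_encard hcover).trans (Set.encard_union_le _ _)

section ArbitraryGraph

variable {V : Type*} {G : SimpleGraph V} {d : ℕ} {σ ρ : Set ℕ} {S D₁ D₂ : Set V}

theorem IsDegreeModulator.encard_neighborSet_inter_le (hS : IsDegreeModulator G d S)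
    (hD : D₁ ∩ S = D₂ ∩ S) {v : V} (hv : v ∉ S) :
    (G.neighborSet v ∩ D₁).encard ≤ (G.neighborSet v ∩ D₂).encard + d :=
  (encard_inter_le_encard_inter_add_encard_diff hD _).trans (by gcongr; exact hS v hv)

theorem IsSigmaRhoDominatingOn.subset_of_inter_eq (hS : IsDegreeModulator G d S)
    (hsep : DSeparation d σ ρ) (hD₁ : IsSigmaRhoDominatingOn G σ ρ Sᶜ D₁)
    (hD₂ : IsSigmaRhoDominatingOn G σ ρ Sᶜ D₂) (hD : D₁ ∩ S = D₂ ∩ S) : D₁ ⊆ D₂ := by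
  intro v hv₁
  by_cases hvS : v ∈ S
  · exact (hD ▸ ⟨hv₁, hvS⟩ : v ∈ D₂ ∩ S).1
  by_contra hv₂
  obtain ⟨i, hi, hcard₁⟩ := (hD₁ v hvS).1 hv₁
  obtain ⟨r, hr, hcard₂⟩ := (hD₂ v hvS).2 hv₂
  have hir := hS.encard_neighborSet_inter_le hD hvS
  have hri := hS.encard_neighborSet_inter_le hD.symm hvS
  rw [hcard₁, hcard₂] at hir hri
  norm_cast at hir hri
  have := hsep.add_lt_or_add_lt hi hr
  lia

theorem stmt3_general (hS : IsDegreeModulator G d S) (hsep : DSeparation d σ ρ)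
    (hD₁ : IsSigmaRhoDominatingOn G σ ρ Sᶜ D₁) (hD₂ : IsSigmaRhoDominatingOn G σ ρ Sᶜ D₂)
    (hD : D₁ ∩ S = D₂ ∩ S) : D₁ = D₂ :=
  (hD₁.subset_of_inter_eq hS hsep hD₂ hD).antisymm (hD₂.subset_of_inter_eq hS hsep hD₁ hD.symm)

end ArbitraryGraph

section FiniteGraph

variable {V : Type*} [Fintype V] [DecidableEq V] {G : SimpleGraph V} [DecidableRel G.Adj]

theorem DegreeModulator.isDegreeModulator {d : ℕ} {S : Finset V} (hS : DegreeModulator G d S) :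
    IsDegreeModulator G d (S : Set V) := by
  intro v hv
  rw [← G.coe_neighborFinset, ← Finset.coe_sdiff, Set.encard_coe_eq_coe_finsetCard]
  exact_mod_cast hS v hv

theorem SigmaRhoDominating.isSigmaRhoDominatingOn {σ ρ : Set ℕ} {D : Finset V}
    (hD : SigmaRhoDominating G σ ρ D) (T : Set V) :
    IsSigmaRhoDominatingOn G σ ρ T (D : Set V) := by
  intro v _
  rw [← G.coe_neighborFinset, ← Finset.coe_inter, Set.encard_coe_eq_coe_finsetCard]
  exact ⟨fun hv ↦ ⟨_, (hD v).1 hv, rfl⟩, fun hv ↦ ⟨_, (hD v).2 hv, rfl⟩⟩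

end FiniteGraph

theorem stmt3 {V : Type*} [Fintype V] [DecidableEq V] (G : SimpleGraph V) [DecidableRel G.Adj]
    (d : ℕ) (S : Finset V) (hS : DegreeModulator G d S)
    (σ ρ : Set ℕ) (hsep : DSeparation d σ ρ)
    (D₁ D₂ : Finset V) (hD₁ : SigmaRhoDominating G σ ρ D₁)
    (hD₂ : SigmaRhoDominating G σ ρ D₂)
    (hSS : D₁ ∩ S = D₂ ∩ S) : D₁ = D₂ :=
  Finset.coe_injective <| stmt3_general hS.isDegreeModulator hsep
    (hD₁.isSigmaRhoDominatingOn _) (hD₂.isSigmaRhoDominatingOn _) (mod_cast hSS)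
end

section
/- Let G be a finite simple graph, let ρ ⊆ ℕ be a finite nonempty set, and let K ∈ ℕ. Let D be a [σ,ρ]-dominating set of G with |D| ≤ K. Suppose T is a set of vertices with |T| ≥ K + 1 such that every vertex t ∈ T has open neighborhood N(t) exactly equal to a fixed vertex set C, where |C| = min(ρ). Then C ⊆ D. -/
theorem SigmaRhoDominating.subset_of_neighborFinset_subset {V : Type*} [Fintype V] [DecidableEq V]
    {G : SimpleGraph V} [DecidableRel G.Adj] {σ ρ : Set ℕ} {C D : Finset V} {v : V}
    (hD : SigmaRhoDominating G σ ρ D) (hvD : v ∉ D) (hvC : G.neighborFinset v ⊆ C)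
    (hC : C.card ∈ lowerBounds ρ) : C ⊆ D := by
  have card_le : C.card ≤ (C ∩ D).card := calc
    C.card ≤ (G.neighborFinset v ∩ D).card := hC ((hD v).2 hvD)
    _ ≤ (C ∩ D).card := Finset.card_le_card (Finset.inter_subset_inter_right hvC)
  exact Finset.inter_eq_left.mp (Finset.eq_of_subset_of_card_le Finset.inter_subset_left card_le)

theorem stmt5_general {V : Type*} [Fintype V] [DecidableEq V] {G : SimpleGraph V}
    [DecidableRel G.Adj] {σ ρ : Set ℕ} {D T C : Finset V} (hD : SigmaRhoDominating G σ ρ D)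
    (hDT : D.card < T.card) (hTC : ∀ t ∈ T, G.neighborFinset t ⊆ C)
    (hC : C.card ∈ lowerBounds ρ) : C ⊆ D := by
  obtain ⟨t, htT, htD⟩ := Finset.exists_mem_notMem_of_card_lt_card hDT
  exact hD.subset_of_neighborFinset_subset htD (hTC t htT) hC

theorem stmt5 {V : Type*} [Fintype V] [DecidableEq V] (G : SimpleGraph V) [DecidableRel G.Adj]
    (σ : Set ℕ) (ρ : Finset ℕ) (hρ : ρ.Nonempty) (K : ℕ)
    (D : Finset V) (hD : SigmaRhoDominating G σ (↑ρ) D) (hDK : D.card ≤ K)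
    (T C : Finset V) (hT : K + 1 ≤ T.card)
    (hTC : ∀ t ∈ T, G.neighborFinset t = C)
    (hC : C.card = ρ.min' hρ) :
    C ⊆ D :=
  stmt5_general hD (hDK.trans_lt hT) (fun t ht ↦ (hTC t ht).subset)
    (hC ▸ (ρ.isLeast_min' hρ).2)
end

section
/- Let G be a finite simple graph and let 𝒫 be a partition of the vertex set of G such that every two distinct vertices lying in the same part of 𝒫 have the same type. Let σ, ρ ⊆ ℕ, and let D and D′ be sets of vertices such that |D ∩ W| = |D′ ∩ W| for every part W ∈ 𝒫. Then D is a [σ,ρ]-dominating set of G if and only if D′ is a [σ,ρ]-dominating set of G. -/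
/-!
Since `D` and `D'` meet every part in equally many vertices, some permutation of the vertices
preserves every part and carries `D` onto `D'`. Moving every vertex to one of the same type is an
automorphism of the graph, and automorphisms preserve `[σ,ρ]`-domination.
-/

section FiberwisePermutation

variable {α ι : Type*}

lemma exists_perm_forall_apply_iff [Finite α] {p q : α → Prop}
    (h : Nat.card {a // p a} = Nat.card {a // q a}) :
    ∃ e : Equiv.Perm α, ∀ a, q (e a) ↔ p a := by
  classical
  obtain ⟨e⟩ := Finite.card_eq.1 h
  exact ⟨e.extendSubtype, fun a ↦
    ⟨not_imp_not.1 (e.extendSubtype_not_mem a), e.extendSubtype_mem a⟩⟩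

lemma natCard_subtype_fiber_mem [DecidableEq ι] (f : α → ι) (s : Finset α) (i : ι) :
    Nat.card {a : {a // f a = i} // a.1 ∈ s} = (s.filter (f · = i)).card := by
  rw [Nat.card_congr (Equiv.subtypeSubtypeEquivSubtypeInter (f · = i) (· ∈ s)),
    Nat.subtype_card]
  simp [and_comm]

lemma exists_perm_map_eq_of_card_fiber_eq [Finite α] [DecidableEq ι] (f : α → ι) {s t : Finset α}
    (h : ∀ i, (s.filter (f · = i)).card = (t.filter (f · = i)).card) :
    ∃ e : Equiv.Perm α, (∀ a, f (e a) = f a) ∧ s.map e.toEmbedding = t := by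
  have exists_fiber_perm (i : ι) :
      ∃ e : Equiv.Perm {a // f a = i}, ∀ a, (e a).1 ∈ t ↔ a.1 ∈ s :=
    exists_perm_forall_apply_iff <| calc
      Nat.card {a : {a // f a = i} // a.1 ∈ s} = (s.filter (f · = i)).card :=
        natCard_subtype_fiber_mem f s i
      _ = (t.filter (f · = i)).card := h i
      _ = Nat.card {a : {a // f a = i} // a.1 ∈ t} := (natCard_subtype_fiber_mem f t i).symm
  choose e he using exists_fiber_perm
  refine ⟨Equiv.ofFiberEquiv e, Equiv.ofFiberEquiv_map e, ?_⟩
  have mem_iff (a : α) : Equiv.ofFiberEquiv e a ∈ t ↔ a ∈ s := he (f a) ⟨a, rfl⟩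
  ext b
  rw [Finset.mem_map_equiv, ← mem_iff, Equiv.apply_symm_apply]

lemma exists_perm_mem_part_map_eq [Fintype α] [DecidableEq α]
    (P : Finpartition (Finset.univ : Finset α)) {s t : Finset α}
    (h : ∀ W ∈ P.parts, (s ∩ W).card = (t ∩ W).card) :
    ∃ e : Equiv.Perm α, (∀ a, e a ∈ P.part a) ∧ s.map e.toEmbedding = t := by
  let part (a : α) : P.parts := ⟨P.part a, P.part_mem.2 (Finset.mem_univ a)⟩
  have part_eq_iff (a : α) (W : P.parts) : part a = W ↔ a ∈ W.1 :=
    Subtype.ext_iff.trans (P.part_eq_iff_mem W.2)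
  have filter_part (u : Finset α) (W : P.parts) : u.filter (part · = W) = u ∩ W := by
    simp only [part_eq_iff, Finset.filter_mem_eq_inter]
  obtain ⟨e, part_apply, map_eq⟩ := exists_perm_map_eq_of_card_fiber_eq part (s := s) (t := t)
    fun W ↦ by simpa only [filter_part] using h W W.2
  exact ⟨e, fun a ↦ (part_eq_iff _ _).1 (part_apply a), map_eq⟩

end FiberwisePermutation

/-- Two vertices of a graph have the same type if they have the same neighbours apart from
each other; in particular every vertex has the same type as itself. -/
def SameType {V : Type*} (G : SimpleGraph V) (u v : V) : Prop :=
  G.neighborSet u \ {v} = G.neighborSet v \ {u}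

namespace SameType

variable {V : Type*} {G : SimpleGraph V} {u u' v v' : V}

lemma iff_erase_neighborFinset_eq [DecidableEq V] [Fintype (G.neighborSet u)]
    [Fintype (G.neighborSet v)] :
    SameType G u v ↔ (G.neighborFinset u).erase v = (G.neighborFinset v).erase u := by
  simp [SameType, ← Finset.coe_inj]

lemma symm (h : SameType G u v) : SameType G v u :=
  Eq.symm h

lemma adj_left (h : SameType G u u') (hne : v ≠ u') (hadj : G.Adj u v) : G.Adj u' v :=
  (h.subset ⟨hadj, hne⟩).1

lemma adj (hu : SameType G u u') (hv : SameType G v v') (hne : u' ≠ v') (hadj : G.Adj u v) :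
    G.Adj u' v' := by
  by_cases hvu' : v = u'
  · by_cases huv' : u = v'
    · exact hvu' ▸ huv' ▸ hadj.symm
    · exact hu.adj_left hne.symm (hv.adj_left huv' hadj.symm).symm
  · exact (hv.adj_left hne (hu.adj_left hvu' hadj).symm).symm

/-- The automorphism given by a permutation that moves each vertex to one of the same type. -/
def isoOfPerm (e : Equiv.Perm V) (he : ∀ v, SameType G v (e v)) : G ≃g G where
  toEquiv := e
  map_rel_iff' {u v} :=
    ⟨fun h ↦ (he u).symm.adj (he v).symm (ne_of_apply_ne e h.ne) h,
      fun h ↦ (he u).adj (he v) (e.injective.ne h.ne) h⟩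

end SameType

section Isomorphism

variable {V W : Type*} {G : SimpleGraph V} {H : SimpleGraph W}

lemma map_iso_neighborFinset (φ : G ≃g H) (v : V) [Fintype (G.neighborSet v)]
    [Fintype (H.neighborSet (φ v))] :
    (G.neighborFinset v).map φ.toEquiv.toEmbedding = H.neighborFinset (φ v) := by
  ext w
  obtain ⟨u, rfl⟩ := φ.surjective w
  have apply_mem_map_iff : φ u ∈ (G.neighborFinset v).map φ.toEquiv.toEmbedding ↔
      u ∈ G.neighborFinset v := Finset.mem_map' _
  rw [apply_mem_map_iff, SimpleGraph.mem_neighborFinset, SimpleGraph.mem_neighborFinset,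
    φ.map_adj_iff]

variable [DecidableEq V] [DecidableEq W]

lemma card_neighborFinset_inter_map_iso (φ : G ≃g H) (D : Finset V) (v : V)
    [Fintype (G.neighborSet v)] [Fintype (H.neighborSet (φ v))] :
    (H.neighborFinset (φ v) ∩ D.map φ.toEquiv.toEmbedding).card =
      (G.neighborFinset v ∩ D).card := by
  rw [← map_iso_neighborFinset, ← Finset.map_inter, Finset.card_map]

variable [Fintype V] [Fintype W] [DecidableRel G.Adj] [DecidableRel H.Adj]

lemma sigmaRhoDominating_map_iso_iff (φ : G ≃g H) {σ ρ : Set ℕ} {D : Finset V} :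
    SigmaRhoDominating H σ ρ (D.map φ.toEquiv.toEmbedding) ↔ SigmaRhoDominating G σ ρ D := by
  refine (φ.toEquiv.forall_congr fun v ↦ ?_).symm
  have apply_mem_map_iff : φ v ∈ D.map φ.toEquiv.toEmbedding ↔ v ∈ D := Finset.mem_map' _
  simp only [RelIso.coe_fn_toEquiv, apply_mem_map_iff, card_neighborFinset_inter_map_iso]

end Isomorphism

theorem stmt11 {V : Type*} [Fintype V] [DecidableEq V] (G : SimpleGraph V) [DecidableRel G.Adj]
    (P : Finpartition (Finset.univ : Finset V))
    (htype : ∀ W ∈ P.parts, ∀ u ∈ W, ∀ v ∈ W, u ≠ v →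
      (G.neighborFinset u).erase v = (G.neighborFinset v).erase u)
    (σ ρ : Set ℕ) (D D' : Finset V)
    (hcard : ∀ W ∈ P.parts, (D ∩ W).card = (D' ∩ W).card) :
    SigmaRhoDominating G σ ρ D ↔ SigmaRhoDominating G σ ρ D' := by
  obtain ⟨e, apply_mem_part, rfl⟩ := exists_perm_mem_part_map_eq P hcard
  have sameType_apply (v : V) : SameType G v (e v) := by
    rw [SameType.iff_erase_neighborFinset_eq]
    by_cases hv : v = e v
    · rw [← hv]
    · exact htype (P.part v) (P.part_mem.2 (Finset.mem_univ v)) v (P.mem_part (Finset.mem_univ v))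
        (e v) (apply_mem_part v) hv
  exact (sigmaRhoDominating_map_iso_iff (SameType.isoOfPerm e sameType_apply)).symm
end

section
/- Let G be a finite simple graph, let s, r ∈ ℕ, and let σ, ρ ⊆ ℕ with σ ⊆ {0, 1, …, s} and ρ ⊆ {1, …, r}. Let D be a [σ,ρ]-dominating set of G. Let W be an independent set of vertices such that every two distinct vertices of W have the same type, and suppose some vertex of W has at least one neighbor in G. Then |W ∩ D| ≤ max(s, r). -/
section

variable {V : Type*} {G : SimpleGraph V}

theorem sameType_iff_erase_neighborFinset_eq [DecidableEq V] {u v : V}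
    [Fintype (G.neighborSet u)] [Fintype (G.neighborSet v)] :
    SameType G u v ↔ (G.neighborFinset u).erase v = (G.neighborFinset v).erase u := by
  rw [SameType, ← Finset.coe_inj, Finset.coe_erase, Finset.coe_erase,
    SimpleGraph.coe_neighborFinset, SimpleGraph.coe_neighborFinset]

theorem SameType.adj_of_adj {u v x : V} (h : SameType G u v) (hux : G.Adj u x)
    (hxv : x ≠ v) : G.Adj v x :=
  (h.subset ⟨hux, hxv⟩ : x ∈ G.neighborSet v \ {u}).1

theorem subset_neighborSet_of_pairwise_sameType {W : Set V} (hW : W.Pairwise (SameType G))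
    {w x : V} (hw : w ∈ W) (hx : x ∉ W) (hwx : G.Adj w x) :
    W ⊆ G.neighborSet x := by
  intro u hu
  obtain rfl | hwu := eq_or_ne w u
  · exact hwx.symm
  · exact ((hW hw hu hwu).adj_of_adj hwx (ne_of_mem_of_not_mem hu hx).symm).symm

theorem SigmaRhoDominating.card_neighborFinset_inter_le_max [Fintype V] [DecidableEq V]
    [DecidableRel G.Adj] {s r : ℕ} {σ ρ : Set ℕ} {D : Finset V}
    (hD : SigmaRhoDominating G σ ρ D) (hσ : ∀ i ∈ σ, i ≤ s) (hρ : ∀ i ∈ ρ, i ≤ r) (v : V) :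
    (G.neighborFinset v ∩ D).card ≤ max s r := by
  by_cases hv : v ∈ D
  · exact le_max_of_le_left (hσ _ ((hD v).1 hv))
  · exact le_max_of_le_right (hρ _ ((hD v).2 hv))

end

theorem stmt12_general {V : Type*} [Fintype V] [DecidableEq V] (G : SimpleGraph V)
    [DecidableRel G.Adj] (s r : ℕ) (σ ρ : Set ℕ)
    (hσ : ∀ i ∈ σ, i ≤ s) (hρ : ∀ i ∈ ρ, i ≤ r)
    (D : Finset V) (hD : SigmaRhoDominating G σ ρ D)
    (W : Finset V) (hWtype : (W : Set V).Pairwise (SameType G))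
    (hWnbr : ∃ w ∈ W, ∃ x ∉ W, G.Adj w x) :
    (W ∩ D).card ≤ max s r := by
  obtain ⟨w, hw, x, hx, hwx⟩ := hWnbr
  have hWx : W ⊆ G.neighborFinset x := by
    rw [← Finset.coe_subset, SimpleGraph.coe_neighborFinset]
    exact subset_neighborSet_of_pairwise_sameType hWtype hw hx hwx
  calc (W ∩ D).card ≤ (G.neighborFinset x ∩ D).card := by gcongr
    _ ≤ max s r := hD.card_neighborFinset_inter_le_max hσ hρ x

theorem stmt12 {V : Type*} [Fintype V] [DecidableEq V] (G : SimpleGraph V) [DecidableRel G.Adj]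
    (s r : ℕ) (σ ρ : Set ℕ)
    (hσ : ∀ i ∈ σ, i ≤ s) (hρ : ∀ i ∈ ρ, 1 ≤ i ∧ i ≤ r)
    (D : Finset V) (hD : SigmaRhoDominating G σ ρ D)
    (W : Finset V)
    (hWind : ∀ u ∈ W, ∀ v ∈ W, ¬ G.Adj u v)
    (hWtype : ∀ u ∈ W, ∀ v ∈ W, u ≠ v →
      (G.neighborFinset u).erase v = (G.neighborFinset v).erase u)
    (hWnbr : ∃ w ∈ W, ∃ x : V, G.Adj w x) :
    (W ∩ D).card ≤ max s r := by
  obtain ⟨w, hw, x, hwx⟩ := hWnbr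
  exact stmt12_general G s r σ ρ hσ (fun i hi ↦ (hρ i hi).2) D hD W
    (fun u hu v hv huv ↦ sameType_iff_erase_neighborFinset_eq.2 (hWtype u hu v hv huv))
    ⟨w, hw, x, fun hx ↦ hWind w hw x hx hwx, hwx⟩
end

section
/- Let G be a finite simple graph, let s ∈ ℕ, and let σ, ρ ⊆ ℕ with σ ⊆ {0, 1, …, s}. Let D be a [σ,ρ]-dominating set of G and let W be a clique of G. Then |W ∩ D| ≤ s + 1. -/
section Clique

variable {V : Type*} {G : SimpleGraph V} {W : Set V} {v : V}

theorem subset_insert_neighborSet_of_isClique (hW : G.IsClique W) (hv : v ∈ W) :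
    W ⊆ insert v (G.neighborSet v) :=
  fun u hu ↦ (eq_or_ne u v).imp id fun huv ↦ hW hv hu huv.symm

theorem encard_inter_le_of_isClique (hW : G.IsClique W) (hv : v ∈ W) (D : Set V) :
    (W ∩ D).encard ≤ (G.neighborSet v ∩ D).encard + 1 :=
  have hWD : W ∩ D ⊆ insert v (G.neighborSet v ∩ D) := fun _ hu ↦
    (subset_insert_neighborSet_of_isClique hW hv hu.1).imp id fun huv ↦ ⟨huv, hu.2⟩
  (Set.encard_le_encard hWD).trans (Set.encard_insert_le _ v)

end Clique

theorem stmt13_general {V : Type*} (G : SimpleGraph V) (s : ℕ∞) (D : Set V)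
    (hD : ∀ v ∈ D, (G.neighborSet v ∩ D).encard ≤ s) (W : Set V) (hW : G.IsClique W) :
    (W ∩ D).encard ≤ s + 1 := by
  obtain hWD | ⟨v, hvW, hvD⟩ := (W ∩ D).eq_empty_or_nonempty
  · simp [hWD]
  · calc
      (W ∩ D).encard ≤ (G.neighborSet v ∩ D).encard + 1 := encard_inter_le_of_isClique hW hvW D
      _ ≤ s + 1 := by gcongr; exact hD v hvD

theorem SigmaRhoDominating.encard_neighborSet_inter_le {V : Type*} [Fintype V] [DecidableEq V]
    {G : SimpleGraph V} [DecidableRel G.Adj] {s : ℕ} {σ ρ : Set ℕ} {D : Finset V}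
    (hD : SigmaRhoDominating G σ ρ D) (hσ : ∀ i ∈ σ, i ≤ s) {v : V} (hv : v ∈ D) :
    (G.neighborSet v ∩ D).encard ≤ s := by
  rw [← G.coe_neighborFinset, ← Finset.coe_inter, Set.encard_coe_eq_coe_finsetCard]
  exact_mod_cast hσ _ ((hD v).1 hv)

theorem stmt13 {V : Type*} [Fintype V] [DecidableEq V] (G : SimpleGraph V) [DecidableRel G.Adj]
    (s : ℕ) (σ ρ : Set ℕ) (hσ : ∀ i ∈ σ, i ≤ s)
    (D : Finset V) (hD : SigmaRhoDominating G σ ρ D)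
    (W : Finset V) (hW : ∀ u ∈ W, ∀ v ∈ W, u ≠ v → G.Adj u v) :
    (W ∩ D).card ≤ s + 1 := by
  rw [← ENat.natCast_le_natCast, ← Set.encard_coe_eq_coe_finsetCard, Finset.coe_inter]
  exact stmt13_general G s D (fun _ ↦ hD.encard_neighborSet_inter_le hσ) W fun u hu v ↦ hW u hu v
end

section
/- Let G be a finite simple graph, let s ∈ ℕ, and let σ ⊆ {0, 1, …, s}. Let D be a set of vertices such that |N(v) ∩ D| ∈ σ for every v ∈ D and |N(v) ∩ D| ≥ 1 for every v ∉ D (i.e., D is a [σ,ℕ*]-dominating set, where ℕ* = ℕ \ {0}). Let W be an independent set of vertices such that every two distinct vertices of W have the same type. Then either |W ∩ D| ≤ s + 1 or W ⊆ D. -/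
section

variable {V : Type*} {G : SimpleGraph V}

theorem encard_neighborSet_inter_coe [DecidableEq V] (v : V) [Fintype (G.neighborSet v)]
    (D : Finset V) : (G.neighborSet v ∩ D).encard = (G.neighborFinset v ∩ D).card := by
  rw [← Set.encard_coe_eq_coe_finsetCard, Finset.coe_inter, SimpleGraph.coe_neighborFinset]

theorem inter_subset_insert_neighborSet_inter {D W : Set V} (hW : W.Pairwise (SameType G))
    {w x : V} (hwW : w ∈ W) (hwD : w ∉ D) (hwx : G.Adj w x) :
    W ∩ D ⊆ insert x (G.neighborSet x ∩ D) := by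
  rintro u ⟨huW, huD⟩
  rcases eq_or_ne u x with rfl | hux
  · exact Set.mem_insert _ _
  · have hwu : SameType G w u := hW hwW huW (ne_of_mem_of_not_mem huD hwD).symm
    exact Set.mem_insert_of_mem _ ⟨(hwu.adj_of_adj hwx hux.symm).symm, huD⟩

end

theorem stmt16_general {V : Type*} (G : SimpleGraph V) (s : ℕ∞) (D W : Set V)
    (hdeg : ∀ v ∈ D, (G.neighborSet v ∩ D).encard ≤ s)
    (hdom : ∀ v ∉ D, 1 ≤ (G.neighborSet v ∩ D).encard)
    (hW : W.Pairwise (SameType G)) :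
    (W ∩ D).encard ≤ s + 1 ∨ W ⊆ D := by
  refine or_iff_not_imp_right.mpr fun hWD => ?_
  obtain ⟨w, hwW, hwD⟩ := Set.not_subset.mp hWD
  obtain ⟨x, hwx, hxD⟩ := Set.one_le_encard_iff_nonempty.mp (hdom w hwD)
  calc (W ∩ D).encard
      ≤ (insert x (G.neighborSet x ∩ D)).encard :=
        Set.encard_le_encard (inter_subset_insert_neighborSet_inter hW hwW hwD hwx)
    _ ≤ (G.neighborSet x ∩ D).encard + 1 := Set.encard_insert_le _ _
    _ ≤ s + 1 := by gcongr; exact hdeg x hxD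

theorem stmt16 {V : Type*} [Fintype V] [DecidableEq V] (G : SimpleGraph V) [DecidableRel G.Adj]
    (s : ℕ) (σ : Set ℕ) (hσ : ∀ i ∈ σ, i ≤ s)
    (D : Finset V)
    (hD : ∀ v : V, (v ∈ D → (G.neighborFinset v ∩ D).card ∈ σ) ∧
      (v ∉ D → 1 ≤ (G.neighborFinset v ∩ D).card))
    (W : Finset V)
    (hWind : ∀ u ∈ W, ∀ v ∈ W, ¬ G.Adj u v)
    (hWtype : ∀ u ∈ W, ∀ v ∈ W, u ≠ v →
      (G.neighborFinset u).erase v = (G.neighborFinset v).erase u) :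
    (W ∩ D).card ≤ s + 1 ∨ W ⊆ D := by
  simpa only [← Finset.coe_inter, Set.encard_coe_eq_coe_finsetCard, Finset.coe_subset,
    ← Nat.cast_add_one, Nat.cast_le] using
    stmt16_general G s D W
      (fun v hv => by simpa [encard_neighborSet_inter_coe] using hσ _ ((hD v).1 hv))
      (fun v hv => by simpa [encard_neighborSet_inter_coe] using (hD v).2 hv)
      (fun u hu v hv huv => sameType_iff_erase_neighborFinset_eq.mpr (hWtype u hu v hv huv))
end
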